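/- Let P be a vector space partition of F_q^v of type d_l^{u_l}⋯d_2^{u_2}d_1^{u_1}, where u_1, u_2 > 0 and d_l > ⋯ > d_2 > d_1 ≥ 1. If q^{d_2−d_1} does not divide u_1, then u_1 ≥ q^{d_1} + 1 (no assumption on the relation between d_2 and 2d_1 is needed). -/

import Mathlib

/-!
For a nonzero functional `f`, a subspace of dimension `k` not contained in `ker f` meets the affine
hyperplane `f = 1` in `q ^ k / q` points, and a subspace of `ker f` does not meet it at all. If no
`d`-dimensional member of a vector space partition lay in `ker f`, counting the points of `f = 1`
member by member would give `u * q ^ d ≡ 0` modulo `q ^ e`, where `u` is the number of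
`d`-dimensional members and all other members have dimension at least `e`. So if `q ^ (e - d) ∤ u`,
every functional vanishes on some `d`-dimensional member: the dual space is covered by `u`
annihilators of index `q ^ d`. Since these share the zero functional, they are not disjoint, and
strictly more than `q ^ d` of them are needed.
-/

open Module
open scoped Finset Pointwise

section AddGroup

variable {G : Type*} [AddGroup G]

theorem index_lt_card_of_biUnion_eq_univ {ι : Type*} {s : Finset ι} {H : ι → AddSubgroup G}
    {k : ℕ} (hk : 1 < k) (hindex : ∀ i ∈ s, (H i).index = k)
    (hcover : ⋃ i ∈ s, (H i : Set G) = Set.univ) : k < #s := by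
  classical
  have hcosets : ⋃ i ∈ s, (0 : G) +ᵥ (H i : Set G) = Set.univ := by simpa using hcover
  obtain ⟨i, hi, -, hle⟩ := AddSubgroup.exists_index_le_card_of_leftCoset_cover hcosets
  rw [hindex i hi] at hle
  refine hle.lt_of_ne fun hcard ↦ ?_
  have hsum : ∑ i ∈ s, ((H i).index : ℚ)⁻¹ = 1 := by
    rw [Finset.sum_congr rfl fun i hi ↦ by rw [hindex i hi], Finset.sum_const, nsmul_eq_mul,
      ← hcard, mul_inv_cancel₀ (by positivity)]
  -- Equality in Neumann's bound forces disjointness, but all the `H i` contain `0`.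
  have hdisj :=
    AddSubgroup.pairwiseDisjoint_leftCoset_cover_of_sum_neg_index_eq_zero hcosets hsum
  have hfinite {i : ι} (hi : i ∈ s) : i ∈ s.filter fun i ↦ (H i).FiniteIndex :=
    Finset.mem_filter.2 ⟨hi, ⟨by rw [hindex i hi]; positivity⟩⟩
  obtain ⟨i, hi, j, hj, hij⟩ := Finset.one_lt_card.1 (hcard ▸ hk)
  exact Set.not_disjoint_iff.2 ⟨0, by simp, by simp⟩ (hdisj (hfinite hi) (hfinite hj) hij)

theorem natCard_mul_ncard_fiber {H : Type*} [AddGroup H] {f : G →+ H}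
    (hf : Function.Surjective f) (h : H) :
    Nat.card H * (f ⁻¹' {h}).ncard = Nat.card G := by
  have hfiber : (f ⁻¹' {h}).ncard = Nat.card f.ker :=
    Nat.card_congr (AddMonoidHom.fiberEquivKerOfSurjective hf h)
  have hindex : f.ker.index = Nat.card H := by
    rw [AddSubgroup.index_ker, AddMonoidHom.range_eq_top.2 hf, AddSubgroup.card_top]
  rw [hfiber, ← hindex, mul_comm, AddSubgroup.card_mul_index]

end AddGroup

section VectorSpace

variable {F V : Type*} [Field F] [AddCommGroup V] [Module F V]

theorem inter_fiber_eq_empty {f : Dual F V} {U : Submodule F V} (hU : U ≤ LinearMap.ker f)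
    {a : F} (ha : a ≠ 0) : (U : Set V) ∩ f ⁻¹' {a} = ∅ :=
  Set.eq_empty_of_forall_notMem fun _ ⟨hxU, hxa⟩ ↦ ha (hxa.symm.trans (hU hxU))

theorem natCard_mul_ncard_inter_fiber {f : Dual F V} {U : Submodule F V}
    [FiniteDimensional F U] (hU : ¬ U ≤ LinearMap.ker f) (a : F) :
    Nat.card F * ((U : Set V) ∩ f ⁻¹' {a}).ncard = Nat.card F ^ finrank F U := by
  have hne : f.domRestrict U ≠ 0 := fun h ↦ hU fun x hx ↦ LinearMap.congr_fun h ⟨x, hx⟩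
  have hfiber : (U : Set V) ∩ f ⁻¹' {a} = (↑) '' (f.domRestrict U ⁻¹' {a}) :=
    (Subtype.image_preimage_coe _ _).symm
  rw [hfiber, Set.ncard_image_of_injective _ Subtype.val_injective, ← natCard_eq_pow_finrank]
  exact natCard_mul_ncard_fiber (f := (f.domRestrict U).toAddMonoidHom)
    (LinearMap.surjective hne) a

theorem index_dualAnnihilator (U : Submodule F V) [FiniteDimensional F U] :
    U.dualAnnihilator.toAddSubgroup.index = Nat.card F ^ finrank F U := by
  rw [← Subspace.dual_finrank_eq (V := U), ← natCard_eq_pow_finrank]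
  exact Nat.card_congr (Subspace.quotAnnihilatorEquiv U).toEquiv

theorem pow_lt_card_of_forall_exists_le_ker [Finite F] {N : Finset (Submodule F V)}
    {d : ℕ} (hd : d ≠ 0) (hN : ∀ U ∈ N, finrank F U = d)
    (hker : ∀ f : Dual F V, ∃ U ∈ N, U ≤ LinearMap.ker f) :
    Nat.card F ^ d < #N := by
  refine index_lt_card_of_biUnion_eq_univ (Nat.one_lt_pow hd Finite.one_lt_card)
    (H := fun U : Submodule F V ↦ U.dualAnnihilator.toAddSubgroup)
    (fun U hU ↦ ?_) ?_
  · have : FiniteDimensional F U := .of_finrank_pos (by rw [hN U hU]; positivity)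
    rw [index_dualAnnihilator, hN U hU]
  · refine Set.iUnion₂_eq_univ_iff.2 fun f ↦ ?_
    obtain ⟨U, hU, hUf⟩ := hker f
    exact ⟨U, hU, (Submodule.mem_dualAnnihilator f).2 fun _ hx ↦ hUf hx⟩

/-- The members of dimension `d` of a finite family of subspaces, counted by `u_i` for `d = d_i` in
the type of a vector space partition. -/
noncomputable def membersOfFinrank (P : Finset (Submodule F V)) (d : ℕ) :
    Finset (Submodule F V) :=
  {U ∈ P | finrank F U = d}

theorem mem_membersOfFinrank {P : Finset (Submodule F V)} {d : ℕ} {U : Submodule F V} :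
    U ∈ membersOfFinrank P d ↔ U ∈ P ∧ finrank F U = d :=
  Finset.mem_filter

/-- `P` is a vector space partition of `V`: every nonzero vector lies in exactly one member of `P`.
The zero subspace is allowed as a member. -/
def IsVectorSpacePartition (P : Finset (Submodule F V)) : Prop :=
  ∀ x : V, x ≠ 0 → ∃! U : Submodule F V, U ∈ P ∧ x ∈ U

namespace IsVectorSpacePartition

variable {P : Finset (Submodule F V)}

theorem sum_ncard_inter (hP : IsVectorSpacePartition P) {S : Set V} (hS : S.Finite)
    (h0 : 0 ∉ S) : ∑ U ∈ P, ((U : Set V) ∩ S).ncard = S.ncard := by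
  have hdisj : (P : Set (Submodule F V)).PairwiseDisjoint fun U ↦ (U : Set V) ∩ S :=
    fun U hU W hW hne ↦ Set.disjoint_left.2 fun x hxU hxW ↦
      hne <| (hP x (ne_of_mem_of_not_mem hxU.2 h0)).unique ⟨hU, hxU.1⟩ ⟨hW, hxW.1⟩
  have hunion : ⋃ U ∈ (P : Set (Submodule F V)), (U : Set V) ∩ S = S := by
    refine (Set.iUnion₂_subset fun _ _ ↦ Set.inter_subset_right).antisymm fun x hx ↦ ?_
    obtain ⟨U, hU, hxU⟩ := (hP x (ne_of_mem_of_not_mem hx h0)).exists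
    exact Set.mem_biUnion hU ⟨hxU, hx⟩
  rw [← finsum_mem_coe_finset, ← P.finite_toSet.ncard_biUnion
    (fun _ _ ↦ hS.subset Set.inter_subset_right) hdisj, hunion]

variable [Finite F] [FiniteDimensional F V]

open Classical in
theorem sum_pow_finrank_filter_not_le_ker (hP : IsVectorSpacePartition P) {f : Dual F V}
    (hf : f ≠ 0) :
    ∑ U ∈ P with ¬ U ≤ LinearMap.ker f, Nat.card F ^ finrank F U =
      Nat.card F ^ finrank F V := by
  have : Finite V := Module.finite_of_finite F
  calc ∑ U ∈ P with ¬ U ≤ LinearMap.ker f, Nat.card F ^ finrank F U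
      = ∑ U ∈ P, Nat.card F * ((U : Set V) ∩ f ⁻¹' {1}).ncard := by
        rw [Finset.sum_filter]
        refine Finset.sum_congr rfl fun U _ ↦ ?_
        split_ifs with hU
        · rw [inter_fiber_eq_empty hU one_ne_zero, Set.ncard_empty, mul_zero]
        · rw [natCard_mul_ncard_inter_fiber hU]
    _ = Nat.card F * (f ⁻¹' {1}).ncard := by
        rw [← Finset.mul_sum, hP.sum_ncard_inter (Set.toFinite _) (by simp)]
    _ = Nat.card F ^ finrank F V := by
        rw [← natCard_eq_pow_finrank]
        exact natCard_mul_ncard_fiber (f := f.toAddMonoidHom) (LinearMap.surjective hf) 1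

variable {d e : ℕ}

theorem pow_dvd_card_mul_pow (hP : IsVectorSpacePartition P) (he : e ≤ finrank F V)
    (hdim : ∀ U ∈ P, finrank F U = d ∨ e ≤ finrank F U) {f : Dual F V} (hf : f ≠ 0)
    (hker : ∀ U ∈ membersOfFinrank P d, ¬ U ≤ LinearMap.ker f) :
    Nat.card F ^ e ∣ #(membersOfFinrank P d) * Nat.card F ^ d := by
  classical
  have hsmall : ∑ U ∈ P with ¬ U ≤ LinearMap.ker f ∧ finrank F U = d, Nat.card F ^ finrank F U =
      #(membersOfFinrank P d) * Nat.card F ^ d := by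
    rw [Finset.filter_congr fun U hU ↦ and_iff_right_of_imp fun hUd ↦
      hker U (mem_membersOfFinrank.2 ⟨hU, hUd⟩)]
    exact Finset.sum_const_nat fun U hU ↦ by rw [(mem_membersOfFinrank.1 hU).2]
  have hlarge : Nat.card F ^ e ∣
      ∑ U ∈ P with ¬ U ≤ LinearMap.ker f ∧ finrank F U ≠ d, Nat.card F ^ finrank F U := by
    refine Finset.dvd_sum fun U hU ↦ pow_dvd_pow _ ?_
    obtain ⟨hUP, -, hUd⟩ := Finset.mem_filter.1 hU
    exact (hdim U hUP).resolve_left hUd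
  have htotal := hP.sum_pow_finrank_filter_not_le_ker hf
  rw [← Finset.sum_filter_add_sum_filter_not _ (fun U : Submodule F V ↦ finrank F U = d),
    Finset.filter_filter, Finset.filter_filter, hsmall] at htotal
  exact (Nat.dvd_add_left hlarge).1 (htotal ▸ pow_dvd_pow _ he)

theorem exists_le_ker (hP : IsVectorSpacePartition P) (he : e ≤ finrank F V)
    (hdim : ∀ U ∈ P, finrank F U = d ∨ e ≤ finrank F U)
    (hndvd : ¬ Nat.card F ^ (e - d) ∣ #(membersOfFinrank P d))
    (f : Dual F V) : ∃ U ∈ membersOfFinrank P d, U ≤ LinearMap.ker f := by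
  rcases eq_or_ne f 0 with rfl | hf
  · obtain ⟨U, hU⟩ := Finset.card_ne_zero.1 fun h ↦ hndvd (h ▸ dvd_zero _)
    exact ⟨U, hU, by simp⟩
  by_contra! hker
  have hdvd := hP.pow_dvd_card_mul_pow he hdim hf hker
  have hde : d ≤ e := by
    by_contra! hlt
    exact hndvd (by simp [Nat.sub_eq_zero_of_le hlt.le])
  rw [← Nat.sub_add_cancel hde, pow_add] at hdvd
  exact hndvd (Nat.dvd_of_mul_dvd_mul_right (pow_pos Nat.card_pos d) hdvd)

end IsVectorSpacePartition

theorem heden_tail_i_general_general [Finite F] [FiniteDimensional F V]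
    {P : Finset (Submodule F V)} (hP : IsVectorSpacePartition P) {d e : ℕ} (hd : d ≠ 0)
    (he : e ≤ finrank F V) (hdim : ∀ U ∈ P, finrank F U = d ∨ e ≤ finrank F U)
    (hndvd : ¬ Nat.card F ^ (e - d) ∣ #(membersOfFinrank P d)) :
    Nat.card F ^ d + 1 ≤ #(membersOfFinrank P d) :=
  pow_lt_card_of_forall_exists_le_ker hd (fun _ hU ↦ (mem_membersOfFinrank.1 hU).2)
    (hP.exists_le_ker he hdim hndvd)

end VectorSpace

/-- If `q^{d_2-d_1} ∤ u_1` then `u_1 ≥ q^{d_1} + 1`, without any assumption relating `d_2`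
and `2d_1`. Here `d 0 = d_1`, `d 1 = d_2`. -/
theorem heden_tail_i_general
    {F : Type} [Field F] [Fintype F] (q v l : ℕ)
    (hq : q = Fintype.card F) (hl : 2 ≤ l)
    (d u : Fin l → ℕ) (hd : StrictMono d) (hd1 : 1 ≤ d ⟨0, by omega⟩)
    (hu1 : 0 < u ⟨0, by omega⟩) (hu2 : 0 < u ⟨1, by omega⟩)
    (P : Finset (Submodule F (Fin v → F)))
    (hpart : ∀ x : Fin v → F, x ≠ 0 →
      ∃! U : Submodule F (Fin v → F), U ∈ P ∧ x ∈ U)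
    (htype : ∀ U ∈ P, ∃ i : Fin l, Module.finrank F ↥U = d i)
    (hcount : ∀ i : Fin l, u i = Set.ncard
      {U : Submodule F (Fin v → F) | U ∈ P ∧ Module.finrank F ↥U = d i})
    (hndvd : ¬ q ^ (d ⟨1, by omega⟩ - d ⟨0, by omega⟩) ∣ u ⟨0, by omega⟩) :
    q ^ d ⟨0, by omega⟩ + 1 ≤ u ⟨0, by omega⟩ := by
  have hdim (U) (hU : U ∈ P) : finrank F U = d ⟨0, by omega⟩ ∨ d ⟨1, by omega⟩ ≤ finrank F U := by
    obtain ⟨i, hi⟩ := htype U hU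
    rcases Nat.eq_zero_or_pos i with h0 | hpos
    · exact .inl (hi.trans (congrArg d (Fin.ext h0)))
    · exact .inr (hi ▸ hd.monotone (Fin.le_def.2 hpos))
  have he : d ⟨1, by omega⟩ ≤ finrank F (Fin v → F) := by
    obtain ⟨U, -, hU⟩ := Set.nonempty_of_ncard_ne_zero (hcount _ ▸ hu2.ne')
    exact hU ▸ Submodule.finrank_le U
  have hcard : u ⟨0, by omega⟩ = #(membersOfFinrank P (d ⟨0, by omega⟩)) := by
    rw [hcount, ← Set.ncard_coe_finset, membersOfFinrank, Finset.coe_filter]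
  rw [hq, ← Nat.card_eq_fintype_card, hcard] at hndvd ⊢
  exact heden_tail_i_general_general hpart (by omega) he hdim hndvd
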